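/- Let f : [−1,1] → ℝ be absolutely continuous with |f′(x)| ≤ 1 almost everywhere. Then for every n ≥ 2 there exists an algebraic polynomial P_n of degree ≤ n such that |f(x) − P_n(x)| ≤ tan(π/(2n))·√(1−x²) + (sec(π/(2n)) − 1)·|x| for all x ∈ [−1,1]. -/

import Mathlib

/-!
Put `g θ = f (cos θ)`. Since `g` is Lipschitz with respect to `cos`, its derivative is `-h sin` with
`h` even, `2π`-periodic and `|h| ≤ 1`. Integrating the derivative by parts against the Bernoulli
kernel `π - s` writes `2π g θ`, up to a constant, as `-sin θ` times the convolution of `h` with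
`(π - s) cos s` plus `cos θ` times the convolution of `h` with `(π - s) sin s`. Replacing the two
kernels by odd, respectively even, trigonometric polynomials of degree `< n` turns this into a
polynomial of degree `≤ n` in `cos θ`, and costs at most the `L¹` distances from the kernels to
these polynomials.

The optimal trigonometric polynomials interpolate the kernels at the zeros of `sin (n s)` and
`cos (n s)`. In the variable `x = cos s`, `(π - s) / sin s` is a superposition of functions
`1 / (a - x)` with `a > 1`, for which the interpolation error at the Chebyshev nodes is explicit
and changes sign exactly with the nodal polynomial. The square waves `sign (sin (n s))` and
`sign (cos (n s))` change sign under translation by `π / n`, so they are orthogonal to all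
trigonometric polynomials of degree `< n`. The `L¹` distances are therefore, up to sign, the
integrals of the kernels against these waves, and comparing `s` with `s + π / n` evaluates them.
-/

open Real Polynomial Finset intervalIntegral
open MeasureTheory (volume)

section Quasiperiodic

variable {p : ℝ → ℂ} {T c : ℝ} {μ : ℂ}

lemma integral_period_eq_zero_of_quasiperiodic (hT : Function.Periodic p T)
    (hp : ∀ θ, p (θ + c) = μ * p θ) (hμ : μ ≠ 1) : ∫ θ in (0)..T, p θ = 0 := by
  have shift : ∫ θ in (0)..T, p θ = μ * ∫ θ in (0)..T, p θ := calc
    ∫ θ in (0)..T, p θ = ∫ θ in c..c + T, p θ := by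
      simpa only [zero_add] using hT.intervalIntegral_add_eq 0 c
    _ = ∫ θ in (0)..T, p (θ + c) := by
      rw [integral_comp_add_right, zero_add, add_comm c]
    _ = μ * ∫ θ in (0)..T, p θ := by simp only [hp, integral_const_mul]
  have : (1 - μ) * ∫ θ in (0)..T, p θ = 0 := by linear_combination shift
  exact (mul_eq_zero.1 this).resolve_left (sub_ne_zero.2 hμ.symm)

lemma one_sub_mul_integral_sub_mul_of_quasiperiodic
    (hint : ∀ a b, IntervalIntegrable p volume a b) (hT : Function.Periodic p T)
    (hp : ∀ θ, p (θ + c) = μ * p θ) (hμ : μ ≠ 1) (a : ℂ) :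
    (1 - μ) * ∫ θ in (0)..T, (a - θ) * p θ = T * ∫ θ in (0)..c, p θ := by
  have hint' (b : ℂ) (x y : ℝ) : IntervalIntegrable (fun θ : ℝ ↦ (b - θ) * p θ) volume x y :=
    (hint x y).continuousOn_mul (by fun_prop)
  have translate : ∫ θ in c..T + c, (a - θ) * p θ = μ * ∫ θ in (0)..T, (a - θ) * p θ := calc
    ∫ θ in c..T + c, (a - θ) * p θ = ∫ θ in (0)..T, (a - ↑(θ + c)) * p (θ + c) := by
      rw [integral_comp_add_right (fun θ ↦ (a - (θ : ℂ)) * p θ), zero_add]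
    _ = ∫ θ in (0)..T, (μ * ((a - θ) * p θ) - μ * c * p θ) := by
      refine integral_congr fun θ _ ↦ ?_
      simp only [hp]
      push_cast
      ring
    _ = μ * ∫ θ in (0)..T, (a - θ) * p θ := by
      rw [integral_sub ((hint' a _ _).const_mul _) ((hint _ _).const_mul _), integral_const_mul,
        integral_const_mul, integral_period_eq_zero_of_quasiperiodic hT hp hμ, mul_zero, sub_zero]
  have tail : ∫ θ in T..T + c, (a - θ) * p θ = ∫ θ in (0)..c, (a - T - θ) * p θ := by
    rw [add_comm T c, ← zero_add T, ← add_assoc, add_zero,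
      ← integral_comp_add_right (fun θ ↦ (a - (θ : ℂ)) * p θ)]
    refine integral_congr fun θ _ ↦ ?_
    simp only [zero_add, hT θ]
    push_cast
    ring
  have jump : (∫ θ in (0)..c, (a - T - θ) * p θ) - ∫ θ in (0)..c, (a - θ) * p θ
      = -T * ∫ θ in (0)..c, p θ := by
    rw [← integral_sub (hint' _ _ _) (hint' _ _ _), ← integral_const_mul]
    exact integral_congr fun θ _ ↦ by ring
  have split₁ := integral_add_adjacent_intervals (hint' a 0 c) (hint' a c (T + c))
  have split₂ := integral_add_adjacent_intervals (hint' a 0 T) (hint' a T (T + c))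
  linear_combination split₂ - split₁ + translate - tail - jump

end Quasiperiodic

section Antiperiodic

variable {s : ℝ → ℝ} {n : ℕ}

lemma one_add_exp_mul_I (x : ℝ) :
    1 + Complex.exp (x * Complex.I) = 2 * cos (x / 2) * Complex.exp (↑(x / 2) * Complex.I) := by
  have double : (x : ℂ) * Complex.I = ↑(x / 2) * Complex.I + ↑(x / 2) * Complex.I := by
    push_cast; ring
  rw [double, Complex.exp_add, Complex.exp_mul_I, Complex.ofReal_cos]
  linear_combination -Complex.cos_sq_add_sin_sq ↑(x / 2) +
    Complex.sin ↑(x / 2) ^ 2 * Complex.I_sq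

lemma exp_mul_I_sub_one (x : ℝ) : Complex.exp (x * Complex.I) - 1 =
    2 * Complex.I * sin (x / 2) * Complex.exp (↑(x / 2) * Complex.I) := by
  have double : (x : ℂ) * Complex.I = ↑(x / 2) * Complex.I + ↑(x / 2) * Complex.I := by
    push_cast; ring
  rw [double, Complex.exp_add, Complex.exp_mul_I, Complex.ofReal_sin]
  linear_combination Complex.cos_sq_add_sin_sq ↑(x / 2) -
    Complex.sin ↑(x / 2) ^ 2 * Complex.I_sq

lemma cos_half_nat_mul_pi_div_pos {k : ℕ} (hk : k < n) : 0 < cos (k * (π / n) / 2) := by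
  have hn : (0 : ℝ) < n := by exact_mod_cast k.zero_le.trans_lt hk
  have hlt : (k : ℝ) * (π / n) < π := by
    rw [← mul_div_assoc, div_lt_iff₀ hn, mul_comm]
    have := pi_pos
    gcongr
  have hnonneg : 0 ≤ (k : ℝ) * (π / n) := by positivity
  exact cos_pos_of_mem_Ioo ⟨by linarith [pi_pos], by linarith⟩

lemma neg_exp_nat_mul_pi_div_ne_one {k : ℕ} (hk : k < n) :
    -Complex.exp (↑(k * (π / n)) * Complex.I) ≠ 1 := by
  have hne : 1 + Complex.exp (↑(k * (π / n)) * Complex.I) ≠ 0 := by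
    rw [one_add_exp_mul_I]
    have hcos : (cos (k * (π / n) / 2) : ℂ) ≠ 0 :=
      Complex.ofReal_ne_zero.2 (cos_half_nat_mul_pi_div_pos hk).ne'
    exact mul_ne_zero (mul_ne_zero two_ne_zero hcos) (Complex.exp_ne_zero _)
  exact fun h ↦ hne (by linear_combination -h)

lemma antiperiodic_mul_exp_add (hs : Function.Antiperiodic s (π / n)) (k : ℕ) (θ : ℝ) :
    (s (θ + π / n) : ℂ) * Complex.exp (k * ↑(θ + π / n) * Complex.I) =
      -Complex.exp (↑(k * (π / n)) * Complex.I) * (s θ * Complex.exp (k * θ * Complex.I)) := by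
  have hexp : (k : ℂ) * ↑(θ + π / n) * Complex.I =
      ↑(k * (π / n)) * Complex.I + k * θ * Complex.I := by push_cast; ring
  rw [hs, hexp, Complex.exp_add]
  push_cast
  ring

lemma periodic_mul_exp (hs : Function.Periodic s (2 * π)) (k : ℕ) :
    Function.Periodic (fun θ : ℝ ↦ (s θ : ℂ) * Complex.exp (k * θ * Complex.I)) (2 * π) := by
  intro θ
  have hexp : (k : ℂ) * ↑(θ + 2 * π) * Complex.I =
      k * θ * Complex.I + k * (2 * π * Complex.I) := by push_cast; ring
  simp only [hs θ, hexp, Complex.exp_add, Complex.exp_nat_mul_two_pi_mul_I, mul_one]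

lemma antiperiodic_pi_div_periodic_two_pi (hn : n ≠ 0) (hs : Function.Antiperiodic s (π / n)) :
    Function.Periodic s (2 * π) := by
  have h := hs.nat_even_mul_periodic n
  have hperiod : (n : ℝ) * (2 * (π / n)) = 2 * π := by field_simp
  rwa [hperiod] at h

lemma intervalIntegrable_mul_exp (hint : ∀ a b, IntervalIntegrable s volume a b) (k : ℕ)
    (a b : ℝ) :
    IntervalIntegrable (fun θ : ℝ ↦ (s θ : ℂ) * Complex.exp (k * θ * Complex.I)) volume a b :=
  IntervalIntegrable.mul_continuousOn ⟨(hint a b).1.ofReal, (hint a b).2.ofReal⟩ (by fun_prop)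

lemma integral_antiperiodic_mul_exp_eq_zero (hs : Function.Antiperiodic s (π / n)) {k : ℕ}
    (hk : k < n) :
    ∫ θ in (0)..2 * π, (s θ : ℂ) * Complex.exp (k * θ * Complex.I) = 0 :=
  integral_period_eq_zero_of_quasiperiodic
    (periodic_mul_exp (antiperiodic_pi_div_periodic_two_pi (by lia) hs) k)
    (antiperiodic_mul_exp_add hs k) (neg_exp_nat_mul_pi_div_ne_one hk)

lemma integral_antiperiodic_mul_cos_eq_zero (hint : ∀ a b, IntervalIntegrable s volume a b)
    (hs : Function.Antiperiodic s (π / n)) {k : ℕ} (hk : k < n) :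
    ∫ θ in (0)..2 * π, s θ * cos (k * θ) = 0 := by
  have h := intervalIntegral_re (intervalIntegrable_mul_exp hint k 0 (2 * π))
  rw [integral_antiperiodic_mul_exp_eq_zero hs hk] at h
  simpa [Complex.exp_re, Complex.exp_im] using h

lemma integral_antiperiodic_mul_sin_eq_zero (hint : ∀ a b, IntervalIntegrable s volume a b)
    (hs : Function.Antiperiodic s (π / n)) {k : ℕ} (hk : k < n) :
    ∫ θ in (0)..2 * π, s θ * sin (k * θ) = 0 := by
  have h := intervalIntegral_im (intervalIntegrable_mul_exp hint k 0 (2 * π))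
  rw [integral_antiperiodic_mul_exp_eq_zero hs hk] at h
  simpa [Complex.exp_re, Complex.exp_im] using h

lemma one_add_exp_mul_integral_antiperiodic (hn : 2 ≤ n)
    (hint : ∀ a b, IntervalIntegrable s volume a b) (hs : Function.Antiperiodic s (π / n)) :
    (1 + Complex.exp (↑(π / n) * Complex.I)) *
        ∫ θ in (0)..2 * π, (π - θ) * (s θ * Complex.exp (θ * Complex.I)) =
      2 * π * ∫ θ in (0)..π / n, s θ * Complex.exp (θ * Complex.I) := by
  have h := one_sub_mul_integral_sub_mul_of_quasiperiodic (intervalIntegrable_mul_exp hint 1)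
    (periodic_mul_exp (antiperiodic_pi_div_periodic_two_pi (by lia) hs) 1)
    (antiperiodic_mul_exp_add hs 1) (neg_exp_nat_mul_pi_div_ne_one hn) π
  simpa using h

end Antiperiodic

section SquareWave

variable {n : ℕ}

lemma measurable_real_sign : Measurable Real.sign :=
  Measurable.ite measurableSet_Iio measurable_const
    (Measurable.ite measurableSet_Ioi measurable_const measurable_const)

lemma abs_real_sign_le_one (x : ℝ) : |Real.sign x| ≤ 1 := by
  rcases Real.sign_apply_eq x with h | h | h <;> simp [h]

lemma intervalIntegrable_of_abs_le {g : ℝ → ℝ} {M : ℝ} (hg : Measurable g)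
    (hM : ∀ t, |g t| ≤ M) (a b : ℝ) : IntervalIntegrable g volume a b :=
  (intervalIntegrable_const (c := M)).mono_fun hg.aestronglyMeasurable
    (.of_forall fun t ↦ (hM t).trans (le_abs_self M))

lemma intervalIntegrable_sign_comp {N : ℝ → ℝ} (hN : Measurable N) (a b : ℝ) :
    IntervalIntegrable (fun θ ↦ Real.sign (N θ)) volume a b :=
  intervalIntegrable_of_abs_le (measurable_real_sign.comp hN) (fun θ ↦ abs_real_sign_le_one (N θ))
    a b

lemma antiperiodic_sign_comp {N : ℝ → ℝ} {c : ℝ} (hN : Function.Antiperiodic N c) :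
    Function.Antiperiodic (fun θ ↦ Real.sign (N θ)) c := fun θ ↦ by
  simp only [hN θ, Real.sign_neg]

lemma sign_mul_eq_abs {x y : ℝ} (hx : x ≠ 0) (hxy : 0 ≤ y * x) : Real.sign x * y = |y| := by
  rcases hx.lt_or_gt with hx | hx
  · rw [Real.sign_of_neg hx, abs_of_nonpos (nonpos_of_mul_nonneg_left hxy hx), neg_one_mul]
  · rw [Real.sign_of_pos hx, abs_of_nonneg (nonneg_of_mul_nonneg_left hxy hx), one_mul]

lemma integral_abs_sub_eq_integral_sign_mul {N K τ : ℝ → ℝ} {a b : ℝ} (hab : a ≤ b)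
    (hN : Measurable N) (hN0 : ∀ᵐ θ, N θ ≠ 0) (hK : Continuous K) (hτ : Continuous τ)
    (hsign : ∀ θ ∈ Set.Ioo a b, 0 ≤ (K θ - τ θ) * N θ)
    (horth : ∫ θ in a..b, Real.sign (N θ) * τ θ = 0) :
    ∫ θ in a..b, |K θ - τ θ| = ∫ θ in a..b, Real.sign (N θ) * K θ := by
  have hint {F : ℝ → ℝ} (hF : Continuous F) :
      IntervalIntegrable (fun θ ↦ Real.sign (N θ) * F θ) volume a b :=
    (intervalIntegrable_sign_comp hN a b).mul_continuousOn hF.continuousOn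
  have habs : ∀ᵐ θ, θ ∈ Set.uIoc a b →
      |K θ - τ θ| = Real.sign (N θ) * K θ - Real.sign (N θ) * τ θ := by
    have hb : ∀ᵐ θ : ℝ, θ ≠ b := by simpa using (Set.countable_singleton b).ae_notMem volume
    filter_upwards [hN0, hb] with θ hθ hθb hmem
    rw [Set.uIoc_of_le hab] at hmem
    rw [← mul_sub, sign_mul_eq_abs hθ (hsign θ ⟨hmem.1, hmem.2.lt_of_ne hθb⟩)]
  rw [integral_congr_ae habs, integral_sub (hint hK) (hint hτ), horth, sub_zero]

lemma antiperiodic_sin_nat_mul (hn : n ≠ 0) :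
    Function.Antiperiodic (fun θ ↦ sin (n * θ)) (π / n) := fun θ ↦ by
  simp only [mul_add, mul_div_cancel₀ π (Nat.cast_ne_zero.2 hn : (n : ℝ) ≠ 0), sin_add_pi]

lemma antiperiodic_cos_nat_mul (hn : n ≠ 0) :
    Function.Antiperiodic (fun θ ↦ cos (n * θ)) (π / n) := fun θ ↦ by
  simp only [mul_add, mul_div_cancel₀ π (Nat.cast_ne_zero.2 hn : (n : ℝ) ≠ 0), cos_add_pi]

lemma ae_sin_nat_mul_ne_zero (hn : n ≠ 0) : ∀ᵐ θ : ℝ, sin (n * θ) ≠ 0 := by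
  filter_upwards [(Set.countable_range fun k : ℤ ↦ k * π / n).ae_notMem volume] with θ hθ hzero
  obtain ⟨k, hk⟩ := sin_eq_zero_iff.1 hzero
  exact hθ ⟨k, by simp only [hk]; field_simp⟩

lemma ae_cos_nat_mul_ne_zero (hn : n ≠ 0) : ∀ᵐ θ : ℝ, cos (n * θ) ≠ 0 := by
  filter_upwards [(Set.countable_range fun k : ℤ ↦ (2 * k + 1) * π / 2 / n).ae_notMem volume]
    with θ hθ hzero
  obtain ⟨k, hk⟩ := cos_eq_zero_iff.1 hzero
  exact hθ ⟨k, by simp only [← hk]; field_simp⟩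

lemma integral_exp_mul_I (a b : ℝ) : ∫ θ in a..b, Complex.exp (θ * Complex.I) =
    -Complex.I * (Complex.exp (b * Complex.I) - Complex.exp (a * Complex.I)) := by
  simp only [mul_comm _ Complex.I, integral_exp_mul_complex Complex.I_ne_zero]
  rw [div_eq_mul_inv, Complex.inv_I]
  ring

lemma integral_sign_sin_mul_exp (hn : n ≠ 0) :
    ∫ θ in (0)..π / n, (Real.sign (sin (n * θ)) : ℂ) * Complex.exp (θ * Complex.I) =
      -Complex.I * (Complex.exp (↑(π / n) * Complex.I) - 1) := by
  have hn' : (0 : ℝ) < n := by positivity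
  have hsign : Set.EqOn
      (fun θ : ℝ ↦ (Real.sign (sin (n * θ)) : ℂ) * Complex.exp (θ * Complex.I))
      (fun θ ↦ Complex.exp (θ * Complex.I)) (Set.Ioo 0 (π / n)) := fun θ hθ ↦ by
    have hlt : n * θ < π := (lt_div_iff₀' hn').1 hθ.2
    simp [Real.sign_of_pos (sin_pos_of_pos_of_lt_pi (mul_pos hn' hθ.1) hlt)]
  rw [integral_congr_Ioo_of_le (by positivity) hsign, integral_exp_mul_I]
  simp

lemma integral_sign_cos_mul_exp (hn : n ≠ 0) :
    ∫ θ in (0)..π / n, (Real.sign (cos (n * θ)) : ℂ) * Complex.exp (θ * Complex.I) =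
      -Complex.I * (2 * Complex.exp (↑(π / n / 2) * Complex.I)
        - (1 + Complex.exp (↑(π / n) * Complex.I))) := by
  have hn' : (0 : ℝ) < n := by positivity
  have hc : 0 < π / n := by positivity
  have hnc : n * (π / n) = π := mul_div_cancel₀ π hn'.ne'
  set c := π / n
  have hleft : Set.EqOn
      (fun θ : ℝ ↦ (Real.sign (cos (n * θ)) : ℂ) * Complex.exp (θ * Complex.I))
      (fun θ ↦ Complex.exp (θ * Complex.I)) (Set.Ioo 0 (c / 2)) := fun θ hθ ↦ by
    have hpos : 0 < cos (n * θ) :=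
      cos_pos_of_mem_Ioo ⟨by nlinarith [hθ.1, pi_pos], by nlinarith [hθ.2]⟩
    simp [Real.sign_of_pos hpos]
  have hright : Set.EqOn
      (fun θ : ℝ ↦ (Real.sign (cos (n * θ)) : ℂ) * Complex.exp (θ * Complex.I))
      (fun θ ↦ -Complex.exp (θ * Complex.I)) (Set.Ioo (c / 2) c) := fun θ hθ ↦ by
    have hneg : cos (n * θ) < 0 :=
      cos_neg_of_pi_div_two_lt_of_lt (by nlinarith [hθ.1]) (by nlinarith [hθ.2, pi_pos])
    simp [Real.sign_of_neg hneg]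
  have hint (a b : ℝ) : IntervalIntegrable
      (fun θ : ℝ ↦ (Real.sign (cos (n * θ)) : ℂ) * Complex.exp (θ * Complex.I)) volume a b := by
    simpa using intervalIntegrable_mul_exp
      (intervalIntegrable_sign_comp (N := fun θ ↦ cos (n * θ)) (by fun_prop)) 1 a b
  rw [← integral_add_adjacent_intervals (hint 0 (c / 2)) (hint (c / 2) c),
    integral_congr_Ioo_of_le (by positivity) hleft, integral_congr_Ioo_of_le (by linarith) hright,
    integral_neg, integral_exp_mul_I, integral_exp_mul_I]
  simp only [Complex.ofReal_zero, zero_mul, Complex.exp_zero]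
  ring

lemma intervalIntegrable_bernoulli_mul_exp {s : ℝ → ℝ}
    (hint : ∀ a b, IntervalIntegrable s volume a b) (a b : ℝ) :
    IntervalIntegrable (fun θ : ℝ ↦ (π - θ) * ((s θ : ℂ) * Complex.exp (θ * Complex.I)))
      volume a b := by
  have hexp := intervalIntegrable_mul_exp hint 1 a b
  simp only [Nat.cast_one, one_mul] at hexp
  exact hexp.continuousOn_mul (by fun_prop)

lemma integral_sign_sin_mul_bernoulli_mul_cos (hn : 2 ≤ n) :
    ∫ θ in (0)..2 * π, Real.sign (sin (n * θ)) * ((π - θ) * cos θ) =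
      2 * π * tan (π / (2 * n)) := by
  have hint := intervalIntegrable_sign_comp (N := fun θ ↦ sin (n * θ)) (by fun_prop)
  have hcos : (cos (π / n / 2) : ℂ) ≠ 0 := by
    simpa using Complex.ofReal_ne_zero.2 (cos_half_nat_mul_pi_div_pos (k := 1) hn).ne'
  have moment := one_add_exp_mul_integral_antiperiodic hn hint
    (antiperiodic_sign_comp (antiperiodic_sin_nat_mul (by lia)))
  rw [integral_sign_sin_mul_exp (by lia), one_add_exp_mul_I, exp_mul_I_sub_one] at moment
  have value : ∫ θ in (0)..2 * π,
      ((π : ℂ) - θ) * (Real.sign (sin (n * θ)) * Complex.exp (θ * Complex.I)) =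
        ↑(2 * π * tan (π / (2 * n))) := by
    have hhalf : π / (2 * n) = π / n / 2 := by ring
    refine mul_left_cancel₀ (mul_ne_zero (mul_ne_zero two_ne_zero hcos)
      (Complex.exp_ne_zero (↑(π / n / 2) * Complex.I))) (moment.trans ?_)
    rw [hhalf, tan_eq_sin_div_cos]
    generalize π / n / 2 = φ at hcos ⊢
    simp only [Complex.ofReal_mul, Complex.ofReal_div, Complex.ofReal_ofNat]
    field_simp
    linear_combination -sin φ * Complex.I_sq
  have h := intervalIntegral_re (intervalIntegrable_bernoulli_mul_exp hint 0 (2 * π))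
  rw [value, RCLike.re_to_complex, Complex.ofReal_re] at h
  rw [← h]
  exact integral_congr fun θ _ ↦ by simp [Complex.exp_re, Complex.exp_im, mul_left_comm]

lemma integral_sign_cos_mul_bernoulli_mul_sin (hn : 2 ≤ n) :
    ∫ θ in (0)..2 * π, Real.sign (cos (n * θ)) * ((π - θ) * sin θ) =
      -(2 * π * (1 / cos (π / (2 * n)) - 1)) := by
  have hint := intervalIntegrable_sign_comp (N := fun θ ↦ cos (n * θ)) (by fun_prop)
  have hcos : (cos (π / n / 2) : ℂ) ≠ 0 := by
    simpa using Complex.ofReal_ne_zero.2 (cos_half_nat_mul_pi_div_pos (k := 1) hn).ne'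
  have moment := one_add_exp_mul_integral_antiperiodic hn hint
    (antiperiodic_sign_comp (antiperiodic_cos_nat_mul (by lia)))
  rw [integral_sign_cos_mul_exp (by lia), one_add_exp_mul_I] at moment
  have value : ∫ θ in (0)..2 * π,
      ((π : ℂ) - θ) * (Real.sign (cos (n * θ)) * Complex.exp (θ * Complex.I)) =
        ↑(-(2 * π * (1 / cos (π / (2 * n)) - 1))) * Complex.I := by
    have hhalf : π / (2 * n) = π / n / 2 := by ring
    refine mul_left_cancel₀ (mul_ne_zero (mul_ne_zero two_ne_zero hcos)
      (Complex.exp_ne_zero (↑(π / n / 2) * Complex.I))) (moment.trans ?_)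
    rw [hhalf]
    generalize π / n / 2 = φ at hcos ⊢
    simp only [Complex.ofReal_neg, Complex.ofReal_mul, Complex.ofReal_sub, Complex.ofReal_div,
      Complex.ofReal_ofNat, Complex.ofReal_one]
    field_simp
  have h := intervalIntegral_im (intervalIntegrable_bernoulli_mul_exp hint 0 (2 * π))
  rw [value, RCLike.im_to_complex, Complex.im_ofReal_mul, Complex.I_im, mul_one] at h
  rw [← h]
  exact integral_congr fun θ _ ↦ by simp [Complex.exp_re, Complex.exp_im, mul_left_comm]

end SquareWave

section Interpolation

lemma eval_div_sub_eval_interpolate {F : Type*} [Field F] [DecidableEq F] {S : Finset F}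
    {N v : F[X]} (hN : N.natDegree ≤ #S) (hNS : ∀ y ∈ S, N.eval y = 0) (hv : v.natDegree ≤ #S)
    {a x : F} (ha : N.eval a ≠ 0) (hxa : x ≠ a) :
    v.eval x / (a - x) - (Lagrange.interpolate S id fun y ↦ v.eval y / (a - y)).eval x =
      v.eval a * N.eval x / (N.eval a * (a - x)) := by
  have haS : a ∉ S := fun h ↦ ha (hNS a h)
  set q := Lagrange.interpolate S id fun y ↦ v.eval y / (a - y) with hq
  have hqdeg : q.degree < #S := Lagrange.degree_interpolate_lt _ Function.injective_id.injOn
  have hqeval (y) (hy : y ∈ S) : q.eval y = v.eval y / (a - y) :=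
    Lagrange.eval_interpolate_at_node (v := id) _ Function.injective_id.injOn hy
  have hcard : (#(insert a S) : WithBot ℕ) = 1 + #S := by
    rw [card_insert_of_notMem haS, add_comm]; rfl
  have hlt {p : F[X]} (hp : p.natDegree ≤ #S) : p.degree < 1 + #S := by
    rw [← hcard, card_insert_of_notMem haS]
    exact degree_le_natDegree.trans_lt (by exact_mod_cast Nat.lt_succ_of_le hp)
  have remainder : v - (C a - X) * q = C (v.eval a / N.eval a) * N := by
    refine eq_of_degrees_lt_of_eval_finset_eq (insert a S) ?_ ?_ fun y hy ↦ ?_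
    · rw [hcard]
      refine (degree_sub_le _ _).trans_lt (max_lt (hlt hv) ((degree_mul_le _ _).trans_lt ?_))
      have hlin : (C a - X).degree ≤ 1 := by compute_degree
      exact (add_le_add_left hlin _).trans_lt
        (WithBot.add_lt_add_left WithBot.one_ne_bot hqdeg)
    · rw [hcard]
      exact hlt ((natDegree_C_mul_le _ _).trans hN)
    · rcases mem_insert.1 hy with rfl | hy
      · simp [ha]
      · have hay : a - y ≠ 0 := sub_ne_zero.2 fun h ↦ haS (h ▸ hy)
        simp [hNS y hy, hqeval y hy, mul_div_cancel₀ _ hay]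
  have hax : a - x ≠ 0 := sub_ne_zero.2 hxa.symm
  have remainder_eval := congrArg (eval x) remainder
  simp only [eval_sub, eval_mul, eval_C, eval_X] at remainder_eval
  field_simp at remainder_eval ⊢
  linear_combination remainder_eval

lemma eval_interpolate_integral {S : Finset ℝ} {G : ℝ → ℝ → ℝ} {a b : ℝ}
    (hG : ∀ y ∈ S, IntervalIntegrable (G y) volume a b) (x : ℝ) :
    (Lagrange.interpolate S id fun y ↦ ∫ r in a..b, G y r).eval x =
      ∫ r in a..b, (Lagrange.interpolate S id fun y ↦ G y r).eval x := by
  simp only [Lagrange.interpolate_apply, eval_finsetSum, eval_mul, eval_C]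
  rw [integral_finsetSum fun y hy ↦ (hG y hy).mul_const _]
  simp only [integral_mul_const]

lemma intervalIntegrable_eval_interpolate {S : Finset ℝ} {G : ℝ → ℝ → ℝ} {a b : ℝ}
    (hG : ∀ y ∈ S, IntervalIntegrable (G y) volume a b) (x : ℝ) :
    IntervalIntegrable (fun r ↦ (Lagrange.interpolate S id fun y ↦ G y r).eval x) volume a b := by
  simp only [Lagrange.interpolate_apply, eval_finsetSum, eval_mul, eval_C]
  simpa only [Finset.sum_fn] using IntervalIntegrable.sum S fun y hy ↦ (hG y hy).mul_const _

end Interpolation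

section BernoulliQuotient

/-- The function of `x = cos θ` that equals `(π - θ) / sin θ` for `θ ∈ (0, 2π)`, `θ ≠ π`: a
superposition over `r ∈ (0, 1)` of multiples of `1 / (a - x)` with `a = (1 + r²) / (2r) > 1`. -/
noncomputable def bernoulliQuotient (x : ℝ) : ℝ := ∫ r in (0)..1, 2 / (1 - 2 * r * x + r ^ 2)

lemma one_sub_two_mul_add_sq_pos {r x : ℝ} (hr : 0 ≤ r) (hx : x < 1) :
    0 < 1 - 2 * r * x + r ^ 2 := by
  rcases hr.eq_or_lt with rfl | hr
  · norm_num
  · nlinarith [sq_nonneg (1 - r), mul_pos hr (sub_pos.2 hx)]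

lemma continuousOn_two_div {x : ℝ} (hx : x < 1) :
    ContinuousOn (fun r : ℝ ↦ 2 / (1 - 2 * r * x + r ^ 2)) (Set.uIcc 0 1) := by
  refine continuousOn_const.div (by fun_prop) fun r hr ↦ ?_
  rw [Set.uIcc_of_le zero_le_one] at hr
  exact (one_sub_two_mul_add_sq_pos hr.1 hx).ne'

lemma cos_lt_one_of_mem_Ioo {θ : ℝ} (hθ : θ ∈ Set.Ioo 0 (2 * π)) : cos θ < 1 := by
  refine (cos_le_one θ).lt_of_ne fun h ↦ ?_
  rw [cos_eq_one_iff_of_lt_of_lt (by linarith [hθ.1, pi_pos]) hθ.2] at h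
  exact hθ.1.ne' h

lemma arctan_one_sub_cos_div_sin {θ : ℝ} (hθ : θ ∈ Set.Ioo 0 π) :
    arctan ((1 - cos θ) / sin θ) = θ / 2 := by
  have hcos : 0 < cos (θ / 2) :=
    cos_pos_of_mem_Ioo ⟨by linarith [hθ.1, pi_pos], by linarith [hθ.2]⟩
  have hsin : 0 < sin (θ / 2) :=
    sin_pos_of_pos_of_lt_pi (by linarith [hθ.1]) (by linarith [hθ.2, pi_pos])
  have htan : (1 - cos θ) / sin θ = tan (θ / 2) := by
    rw [show θ = 2 * (θ / 2) by ring, cos_two_mul', sin_two_mul, ← cos_sq_add_sin_sq (θ / 2),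
      mul_div_cancel_left₀ _ two_ne_zero, tan_eq_sin_div_cos]
    field_simp
    ring
  rw [htan, arctan_tan (by linarith [hθ.1, pi_pos]) (by linarith [hθ.2])]

lemma arctan_neg_cos_div_sin {θ : ℝ} (hθ : θ ∈ Set.Ioo 0 π) :
    arctan (-cos θ / sin θ) = θ - π / 2 := by
  have htan : -cos θ / sin θ = tan (θ - π / 2) := by
    rw [tan_eq_sin_div_cos, sin_sub_pi_div_two, cos_sub_pi_div_two]
  rw [htan, arctan_tan (by linarith [hθ.1]) (by linarith [hθ.2])]

lemma hasDerivAt_arctan_sub_cos_div_sin {θ : ℝ} (hθ : sin θ ≠ 0) (r : ℝ) :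
    HasDerivAt (fun r ↦ 2 / sin θ * arctan ((r - cos θ) / sin θ))
      (2 / (1 - 2 * r * cos θ + r ^ 2)) r := by
  have h := ((((hasDerivAt_id r).sub_const (cos θ)).div_const (sin θ)).arctan).const_mul
    (2 / sin θ)
  refine h.congr_deriv ?_
  have hden : 1 - 2 * r * cos θ + r ^ 2 = sin θ ^ 2 + (r - cos θ) ^ 2 := by
    linear_combination -sin_sq_add_cos_sq θ
  have : 0 < sin θ ^ 2 + (r - cos θ) ^ 2 := by positivity
  rw [hden]
  simp only [id]
  field_simp

lemma sin_mul_bernoulliQuotient_cos_of_lt_pi {θ : ℝ} (hθ : θ ∈ Set.Ioo 0 π) :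
    sin θ * bernoulliQuotient (cos θ) = π - θ := by
  have hsin : sin θ ≠ 0 := (sin_pos_of_mem_Ioo hθ).ne'
  have hcos : cos θ < 1 := cos_lt_one_of_mem_Ioo ⟨hθ.1, by linarith [hθ.2, pi_pos]⟩
  rw [bernoulliQuotient, integral_eq_sub_of_hasDerivAt
    (fun r _ ↦ hasDerivAt_arctan_sub_cos_div_sin hsin r)
    (continuousOn_two_div hcos).intervalIntegrable, zero_sub, arctan_one_sub_cos_div_sin hθ,
    arctan_neg_cos_div_sin hθ]
  field_simp
  ring

lemma sin_mul_bernoulliQuotient_cos {θ : ℝ} (hθ : θ ∈ Set.Ioo 0 (2 * π)) :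
    sin θ * bernoulliQuotient (cos θ) = π - θ := by
  rcases lt_trichotomy θ π with hlt | rfl | hgt
  · exact sin_mul_bernoulliQuotient_cos_of_lt_pi ⟨hθ.1, hlt⟩
  · simp
  · have h := sin_mul_bernoulliQuotient_cos_of_lt_pi (θ := 2 * π - θ)
      ⟨by linarith [hθ.2], by linarith⟩
    rw [sin_two_pi_sub, cos_two_pi_sub] at h
    linarith

lemma two_div_eq_div_sub {r : ℝ} (hr : r ≠ 0) (x : ℝ) :
    2 / (1 - 2 * r * x + r ^ 2) = 1 / r * (1 / ((1 + r ^ 2) / (2 * r) - x)) := by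
  have h : (1 + r ^ 2) / (2 * r) - x = (1 - 2 * r * x + r ^ 2) / (2 * r) := by
    field_simp
    ring
  rw [h]
  field_simp

lemma one_lt_one_add_sq_div {r : ℝ} (hr : r ∈ Set.Ioo 0 1) : 1 < (1 + r ^ 2) / (2 * r) := by
  rw [lt_div_iff₀ (by linarith [hr.1])]
  nlinarith [sq_pos_of_pos (sub_pos.2 hr.2)]

variable {S : Finset ℝ} {N v : ℝ[X]}

lemma two_div_sub_interpolate_mul_nonneg (hN : N.natDegree ≤ #S) (hNS : ∀ y ∈ S, N.eval y = 0)
    (hNpos : ∀ a, 1 < a → 0 < N.eval a) (hv : v.natDegree ≤ #S)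
    (hvnonneg : ∀ a, 1 < a → 0 ≤ v.eval a) {x r : ℝ} (hx : x < 1) (hr : r ∈ Set.Ioo 0 1) :
    0 ≤ (v.eval x * (2 / (1 - 2 * r * x + r ^ 2)) - (Lagrange.interpolate S id fun y ↦
      v.eval y * (2 / (1 - 2 * r * y + r ^ 2))).eval x) * N.eval x := by
  have ha := one_lt_one_add_sq_div hr
  have remainder := eval_div_sub_eval_interpolate hN hNS hv (hNpos _ ha).ne' (hx.trans ha).ne
  simp only [two_div_eq_div_sub hr.1.ne']
  set a := (1 + r ^ 2) / (2 * r)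
  have factor : (fun y ↦ v.eval y * (1 / r * (1 / (a - y)))) =
      (1 / r) • fun y ↦ v.eval y / (a - y) := by
    ext y
    simp only [Pi.smul_apply, smul_eq_mul]
    ring
  have value : (v.eval x * (1 / r * (1 / (a - x))) - (Lagrange.interpolate S id fun y ↦
      v.eval y * (1 / r * (1 / (a - y)))).eval x) * N.eval x =
        1 / r * (v.eval a * N.eval x ^ 2 / (N.eval a * (a - x))) := by
    rw [factor, map_smul, eval_smul, smul_eq_mul]
    linear_combination 1 / r * N.eval x * remainder
  rw [value]
  have hr0 := hr.1
  have hNa := hNpos a ha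
  have hva := hvnonneg a ha
  have hax : 0 < a - x := by linarith
  positivity

lemma mul_bernoulliQuotient_sub_interpolate_mul_nonneg
    (hN : N.natDegree ≤ #S) (hNS : ∀ y ∈ S, N.eval y = 0) (hNpos : ∀ a, 1 ≤ a → 0 < N.eval a)
    (hv : v.natDegree ≤ #S) (hvnonneg : ∀ a, 1 < a → 0 ≤ v.eval a) {x : ℝ} (hx : x < 1) :
    0 ≤ (v.eval x * bernoulliQuotient x - (Lagrange.interpolate S id fun y ↦
      v.eval y * bernoulliQuotient y).eval x) * N.eval x := by
  have hS (y) (hy : y ∈ S) : y < 1 := by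
    by_contra! h
    exact (hNpos y h).ne' (hNS y hy)
  have hint {y : ℝ} (hy : y < 1) :
      IntervalIntegrable (fun r ↦ v.eval y * (2 / (1 - 2 * r * y + r ^ 2))) volume 0 1 :=
    (continuousOn_two_div hy).intervalIntegrable.const_mul _
  simp only [bernoulliQuotient, ← integral_const_mul]
  rw [eval_interpolate_integral fun y hy ↦ hint (hS y hy), ← integral_sub (hint hx)
    (intervalIntegrable_eval_interpolate (fun y hy ↦ hint (hS y hy)) x), ← integral_mul_const]
  refine integral_nonneg_of_ae_restrict zero_le_one ?_
  rw [← MeasureTheory.Measure.restrict_congr_set MeasureTheory.Ioo_ae_eq_Icc]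
  exact MeasureTheory.ae_restrict_of_forall_mem measurableSet_Ioo fun r hr ↦
    two_div_sub_interpolate_mul_nonneg hN hNS (fun a ha ↦ hNpos a ha.le) hv hvnonneg hx hr

end BernoulliQuotient

section Chebyshev

lemma eval_U_real_pos (m : ℕ) {a : ℝ} (ha : 1 ≤ a) : 0 < (Chebyshev.U ℝ m).eval a := by
  induction m with
  | zero => simp
  | succ k ih =>
    push_cast
    rw [Chebyshev.U_eq_X_mul_U_add_T, eval_add, eval_mul, eval_X]
    have hT := Chebyshev.one_le_eval_T_real (k + 1) ha
    positivity

lemma card_toFinset_roots_U_real (m : ℕ) : #(Chebyshev.U ℝ m).roots.toFinset = m := by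
  rw [Chebyshev.roots_U_real, val_toFinset, card_image_of_injOn, card_range]
  exact (range m).nodup_map_iff_injOn.1 (Chebyshev.roots_U_real_nodup m)

lemma card_toFinset_roots_T_real (m : ℕ) : #(Chebyshev.T ℝ m).roots.toFinset = m := by
  rw [Chebyshev.roots_T_real, val_toFinset, card_image_of_injOn, card_range]
  exact (range m).nodup_map_iff_injOn.1 (Chebyshev.roots_T_real_nodup m)

/-- The Chebyshev polynomials of the second kind as a polynomial sequence, one of each degree;
the companion of `Polynomial.Chebyshev.chebyshevTsequence`. -/
noncomputable def chebyshevUSequence : Polynomial.Sequence ℝ where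
  elems' m := Chebyshev.U ℝ m
  degree_eq' m := Chebyshev.degree_U_natCast ℝ m

lemma exists_eq_sum_smul_sequence {F : Type*} [Field F] (B : Polynomial.Sequence F) {m : ℕ}
    {p : F[X]} (hp : p.degree < m) : ∃ c : ℕ → F, p = ∑ k ∈ range m, c k • B k := by
  have hmem : p ∈ degreeLT F m := mem_degreeLT.2 hp
  have hunit (i : ℕ) : IsUnit (B i).leadingCoeff := by simp
  rw [← B.span_degreeLT fun i _ ↦ hunit i, ← coe_range,
    Submodule.mem_span_image_finset_iff_exists_fun'] at hmem
  obtain ⟨c, hc⟩ := hmem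
  exact ⟨c, hc.symm⟩

lemma exists_eval_cos_eq_sum_cos {m : ℕ} {p : ℝ[X]} (hp : p.degree < m) :
    ∃ a : ℕ → ℝ, ∀ θ, p.eval (cos θ) = ∑ k ∈ range m, a k * cos (k * θ) := by
  obtain ⟨a, rfl⟩ := exists_eq_sum_smul_sequence (Chebyshev.chebyshevTsequence ℝ) hp
  refine ⟨a, fun θ ↦ ?_⟩
  simp only [eval_finsetSum, eval_smul, smul_eq_mul]
  refine sum_congr rfl fun k _ ↦ congrArg (a k * ·) ?_
  exact_mod_cast Chebyshev.T_real_cos θ k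

lemma exists_sin_mul_eval_cos_eq_sum_sin {m : ℕ} {p : ℝ[X]} (hp : p.degree < m) :
    ∃ b : ℕ → ℝ, ∀ θ, sin θ * p.eval (cos θ) = ∑ k ∈ range (m + 1), b k * sin (k * θ) := by
  obtain ⟨b, rfl⟩ := exists_eq_sum_smul_sequence chebyshevUSequence hp
  -- At `k = 0` the truncated `k - 1` is harmless, since `sin (0 * θ) = 0`.
  refine ⟨fun k ↦ b (k - 1), fun θ ↦ ?_⟩
  rw [sum_range_succ', Nat.cast_zero, zero_mul, sin_zero, mul_zero, add_zero, eval_finsetSum,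
    mul_sum]
  refine sum_congr rfl fun k _ ↦ ?_
  have hU : (chebyshevUSequence k).eval (cos θ) * sin θ = sin ((k + 1 : ℕ) * θ) := by
    exact_mod_cast Chebyshev.U_real_cos θ k
  simp only [eval_smul, smul_eq_mul, ← hU, Nat.add_sub_cancel]
  ring

end Chebyshev

section BestApproximation

variable {n : ℕ}

lemma degree_interpolate_toFinset_roots_lt (N : ℝ[X]) (F : ℝ → ℝ) :
    (Lagrange.interpolate N.roots.toFinset id F).degree < #N.roots.toFinset :=
  Lagrange.degree_interpolate_lt F Function.injective_id.injOn

lemma eval_eq_zero_of_mem_toFinset_roots {N : ℝ[X]} {y : ℝ} (hy : y ∈ N.roots.toFinset) :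
    N.eval y = 0 :=
  (mem_roots'.1 (Multiset.mem_toFinset.1 hy)).2

lemma exists_sum_sin_sub_mul_sin_nonneg (hn : 2 ≤ n) :
    ∃ b : ℕ → ℝ, ∀ θ ∈ Set.Ioo 0 (2 * π),
      0 ≤ ((π - θ) * cos θ - ∑ k ∈ range n, b k * sin (k * θ)) * sin (n * θ) := by
  obtain ⟨m, rfl⟩ := Nat.exists_eq_add_of_le' (show 1 ≤ n by lia)
  set N := Chebyshev.U ℝ m
  have hcard : #N.roots.toFinset = m := card_toFinset_roots_U_real m
  set p := Lagrange.interpolate N.roots.toFinset id fun y ↦ (X : ℝ[X]).eval y * bernoulliQuotient y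
  have hp : p.degree < m := hcard ▸ degree_interpolate_toFinset_roots_lt N _
  obtain ⟨b, hb⟩ := exists_sin_mul_eval_cos_eq_sum_sin hp
  refine ⟨b, fun θ hθ ↦ ?_⟩
  have hN : N.eval (cos θ) * sin θ = sin ((m + 1 : ℕ) * θ) := by
    exact_mod_cast Chebyshev.U_real_cos θ m
  have key : 0 ≤ ((X : ℝ[X]).eval (cos θ) * bernoulliQuotient (cos θ) - p.eval (cos θ)) *
      N.eval (cos θ) := mul_bernoulliQuotient_sub_interpolate_mul_nonneg
    (by rw [Chebyshev.natDegree_U_natCast, hcard]) (fun y ↦ eval_eq_zero_of_mem_toFinset_roots)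
    (fun a ↦ eval_U_real_pos m) (by rw [hcard, natDegree_X]; lia)
    (fun a ha ↦ by rw [eval_X]; linarith) (cos_lt_one_of_mem_Ioo hθ)
  rw [eval_X] at key
  rw [← hb, ← hN, ← sin_mul_bernoulliQuotient_cos hθ]
  refine (mul_nonneg (sq_nonneg (sin θ)) key).trans_eq ?_
  ring

lemma exists_sum_cos_sub_mul_neg_cos_nonneg (hn : 2 ≤ n) :
    ∃ a : ℕ → ℝ, ∀ θ ∈ Set.Ioo 0 (2 * π),
      0 ≤ ((π - θ) * sin θ - ∑ k ∈ range n, a k * cos (k * θ)) * -cos (n * θ) := by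
  set N := Chebyshev.T ℝ n
  have hcard : #N.roots.toFinset = n := card_toFinset_roots_T_real n
  set p := Lagrange.interpolate N.roots.toFinset id
    fun y ↦ (X ^ 2 - 1 : ℝ[X]).eval y * bernoulliQuotient y
  have hp : (-p).degree < n := by
    rw [degree_neg]
    exact hcard ▸ degree_interpolate_toFinset_roots_lt N _
  obtain ⟨a, ha⟩ := exists_eval_cos_eq_sum_cos hp
  refine ⟨a, fun θ hθ ↦ ?_⟩
  have hN : N.eval (cos θ) = cos (n * θ) := by exact_mod_cast Chebyshev.T_real_cos θ n
  have hv : (X ^ 2 - 1 : ℝ[X]).natDegree ≤ 2 := by compute_degree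
  have key : 0 ≤ ((X ^ 2 - 1 : ℝ[X]).eval (cos θ) * bernoulliQuotient (cos θ) -
      p.eval (cos θ)) * N.eval (cos θ) := mul_bernoulliQuotient_sub_interpolate_mul_nonneg
    (by rw [Chebyshev.natDegree_T, hcard, Int.natAbs_natCast])
    (fun y ↦ eval_eq_zero_of_mem_toFinset_roots)
    (fun a ha ↦ zero_lt_one.trans_le (Chebyshev.one_le_eval_T_real n ha)) (by lia)
    (fun a ha ↦ by simp only [eval_sub, eval_pow, eval_X, eval_one]; nlinarith)
    (cos_lt_one_of_mem_Ioo hθ)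
  simp only [eval_sub, eval_pow, eval_X, eval_one] at key
  rw [← ha, ← hN, ← sin_mul_bernoulliQuotient_cos hθ, eval_neg]
  refine key.trans_eq ?_
  linear_combination bernoulliQuotient (cos θ) * N.eval (cos θ) * sin_sq_add_cos_sq θ

lemma integral_mul_sum {s : ℝ → ℝ} {e : ℕ → ℝ → ℝ} {x y : ℝ}
    (hint : IntervalIntegrable s volume x y) (he : ∀ k, Continuous (e k)) (c : ℕ → ℝ) (n : ℕ) :
    ∫ θ in x..y, s θ * ∑ k ∈ range n, c k * e k θ =
      ∑ k ∈ range n, c k * ∫ θ in x..y, s θ * e k θ := by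
  simp only [mul_sum, mul_left_comm (s _)]
  rw [integral_finsetSum fun k _ ↦ (hint.mul_continuousOn (he k).continuousOn).const_mul (c k)]
  simp only [integral_const_mul]

lemma integral_mul_sum_eq_zero {s : ℝ → ℝ} {e : ℕ → ℝ → ℝ} {x y : ℝ}
    (hint : IntervalIntegrable s volume x y) (he : ∀ k, Continuous (e k))
    (horth : ∀ k < n, ∫ θ in x..y, s θ * e k θ = 0) (c : ℕ → ℝ) :
    ∫ θ in x..y, s θ * ∑ k ∈ range n, c k * e k θ = 0 := by
  rw [integral_mul_sum hint he]
  exact sum_eq_zero fun k hk ↦ by rw [horth k (mem_range.1 hk), mul_zero]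

lemma exists_integral_abs_bernoulli_mul_cos_sub_eq (hn : 2 ≤ n) :
    ∃ b : ℕ → ℝ, ∫ θ in (0)..2 * π, |(π - θ) * cos θ - ∑ k ∈ range n, b k * sin (k * θ)| =
      2 * π * tan (π / (2 * n)) := by
  obtain ⟨b, hb⟩ := exists_sum_sin_sub_mul_sin_nonneg hn
  have hint := intervalIntegrable_sign_comp (N := fun θ ↦ sin (n * θ)) (by fun_prop)
  have hanti := antiperiodic_sign_comp (antiperiodic_sin_nat_mul (n := n) (by lia))
  refine ⟨b, ?_⟩
  rw [integral_abs_sub_eq_integral_sign_mul two_pi_pos.le (by fun_prop)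
    (ae_sin_nat_mul_ne_zero (by lia)) (by fun_prop) (by fun_prop) hb
    (integral_mul_sum_eq_zero (hint _ _) (fun k ↦ by fun_prop)
      (fun k ↦ integral_antiperiodic_mul_sin_eq_zero hint hanti) b)]
  exact integral_sign_sin_mul_bernoulli_mul_cos hn

lemma exists_integral_abs_bernoulli_mul_sin_sub_eq (hn : 2 ≤ n) :
    ∃ a : ℕ → ℝ, ∫ θ in (0)..2 * π, |(π - θ) * sin θ - ∑ k ∈ range n, a k * cos (k * θ)| =
      2 * π * (1 / cos (π / (2 * n)) - 1) := by
  obtain ⟨a, ha⟩ := exists_sum_cos_sub_mul_neg_cos_nonneg hn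
  have hint := intervalIntegrable_sign_comp (N := fun θ ↦ -cos (n * θ)) (by fun_prop)
  have hanti : Function.Antiperiodic (fun θ ↦ Real.sign (-cos (n * θ))) (π / n) :=
    antiperiodic_sign_comp fun θ ↦ congrArg Neg.neg (antiperiodic_cos_nat_mul (by lia) θ)
  refine ⟨a, ?_⟩
  rw [integral_abs_sub_eq_integral_sign_mul two_pi_pos.le (by fun_prop)
    ((ae_cos_nat_mul_ne_zero (by lia)).mono fun θ ↦ neg_ne_zero.2) (by fun_prop) (by fun_prop) ha
    (integral_mul_sum_eq_zero (hint _ _) (fun k ↦ by fun_prop)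
      (fun k ↦ integral_antiperiodic_mul_cos_eq_zero hint hanti) a)]
  simp only [Real.sign_neg, neg_mul, integral_neg]
  rw [integral_sign_cos_mul_bernoulli_mul_sin hn, neg_neg]

end BestApproximation

section CosinePolynomials

lemma exists_eval_cos_eq_sin_mul_sum_sin (n : ℕ) (b : ℕ → ℝ) :
    ∃ Q : ℝ[X], Q.natDegree ≤ n ∧
      ∀ θ, Q.eval (cos θ) = sin θ * ∑ k ∈ range n, b k * sin (k * θ) := by
  refine ⟨∑ k ∈ range n, C (b k / 2) * (Chebyshev.T ℝ (k - 1) - Chebyshev.T ℝ (k + 1)), ?_,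
    fun θ ↦ ?_⟩
  · refine natDegree_sum_le_of_forall_le _ _ fun k hk ↦ (natDegree_C_mul_le _ _).trans ?_
    have hk := mem_range.1 hk
    refine natDegree_sub_le_of_le (n := n) ?_ ?_ |>.trans (max_self n).le <;>
      rw [Chebyshev.natDegree_T] <;> lia
  · simp only [eval_finsetSum, eval_mul, eval_C, eval_sub, Chebyshev.T_real_cos, mul_sum]
    refine sum_congr rfl fun k _ ↦ ?_
    have h := two_mul_sin_mul_sin (k * θ) θ
    push_cast
    rw [sub_one_mul, add_one_mul]
    linear_combination -(b k / 2) * h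

lemma exists_eval_cos_eq_cos_mul_sum_cos (n : ℕ) (a : ℕ → ℝ) :
    ∃ Q : ℝ[X], Q.natDegree ≤ n ∧
      ∀ θ, Q.eval (cos θ) = cos θ * ∑ k ∈ range n, a k * cos (k * θ) := by
  refine ⟨∑ k ∈ range n, C (a k / 2) * (Chebyshev.T ℝ (k - 1) + Chebyshev.T ℝ (k + 1)), ?_,
    fun θ ↦ ?_⟩
  · refine natDegree_sum_le_of_forall_le _ _ fun k hk ↦ (natDegree_C_mul_le _ _).trans ?_
    have hk := mem_range.1 hk
    refine natDegree_add_le_of_degree_le ?_ ?_ <;> rw [Chebyshev.natDegree_T] <;> lia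
  · simp only [eval_finsetSum, eval_mul, eval_C, eval_add, Chebyshev.T_real_cos, mul_sum]
    refine sum_congr rfl fun k _ ↦ ?_
    have h := two_mul_cos_mul_cos (k * θ) θ
    push_cast
    rw [sub_one_mul, add_one_mul]
    linear_combination -(a k / 2) * h

end CosinePolynomials

section Convolution

variable {h : ℝ → ℝ}

/-- The unnormalised `k`-th cosine coefficient of `h`: for an even `2π`-periodic `h`, convolution
with `h` multiplies `cos (k * ·)` and `sin (k * ·)` by it. -/
noncomputable def cosCoeff (h : ℝ → ℝ) (k : ℕ) : ℝ := ∫ u in (-π)..π, h u * cos (k * u)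

lemma integral_even_mul_sin_eq_zero (heven : Function.Even h) (ω a : ℝ) :
    ∫ u in (-a)..a, h u * sin (ω * u) = 0 := by
  have reflect := integral_comp_neg (a := -a) (b := a) fun u ↦ h u * sin (ω * u)
  simp only [heven _, mul_neg, sin_neg, integral_neg, neg_neg] at reflect
  linarith

lemma integral_comp_sub_mul_of_periodic {c : ℝ → ℝ} {T : ℝ} (hh : Function.Periodic h T)
    (hc : Function.Periodic c T) (θ x : ℝ) :
    ∫ s in (0)..T, h (θ - s) * c s = ∫ u in x..x + T, h u * c (θ - u) := by
  have reflect := integral_comp_sub_left (a := 0) (b := T) (fun u ↦ h u * c (θ - u)) θ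
  have hprod : Function.Periodic (fun u ↦ h u * c (θ - u)) T := fun u ↦ by
    simp only [hh u, ← sub_sub, hc.sub_eq]
  simp only [sub_sub_cancel, sub_zero] at reflect
  rw [reflect, hprod.intervalIntegral_add_eq x (θ - T), sub_add_cancel]

lemma intervalIntegrable_comp_sub_left (hint : ∀ a b, IntervalIntegrable h volume a b)
    (θ a b : ℝ) :
    IntervalIntegrable (fun s ↦ h (θ - s)) volume a b := by
  simpa only [sub_sub_cancel] using (hint (θ - a) (θ - b)).comp_sub_left θ

lemma integral_comp_sub_mul_cos (hint : ∀ a b, IntervalIntegrable h volume a b)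
    (hper : Function.Periodic h (2 * π)) (heven : Function.Even h) (k : ℕ) (θ : ℝ) :
    ∫ s in (0)..2 * π, h (θ - s) * cos (k * s) = cos (k * θ) * cosCoeff h k := by
  have hcos : Function.Periodic (fun s ↦ cos (k * s)) (2 * π) := fun s ↦ by
    simp only [mul_add, cos_add_nat_mul_two_pi]
  have expand (u : ℝ) : h u * cos (k * (θ - u)) =
      cos (k * θ) * (h u * cos (k * u)) + sin (k * θ) * (h u * sin (k * u)) := by
    rw [mul_sub, cos_sub]
    ring
  rw [integral_comp_sub_mul_of_periodic hper hcos θ (-π), show -π + 2 * π = π by ring]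
  simp only [expand]
  rw [integral_add (((hint _ _).mul_continuousOn (by fun_prop)).const_mul _)
      (((hint _ _).mul_continuousOn (by fun_prop)).const_mul _),
    integral_const_mul, integral_const_mul, integral_even_mul_sin_eq_zero heven, mul_zero, add_zero,
    cosCoeff]

lemma integral_comp_sub_mul_sin (hint : ∀ a b, IntervalIntegrable h volume a b)
    (hper : Function.Periodic h (2 * π)) (heven : Function.Even h) (k : ℕ) (θ : ℝ) :
    ∫ s in (0)..2 * π, h (θ - s) * sin (k * s) = sin (k * θ) * cosCoeff h k := by
  have hsin : Function.Periodic (fun s ↦ sin (k * s)) (2 * π) := fun s ↦ by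
    simp only [mul_add, sin_add_nat_mul_two_pi]
  have expand (u : ℝ) : h u * sin (k * (θ - u)) =
      sin (k * θ) * (h u * cos (k * u)) - cos (k * θ) * (h u * sin (k * u)) := by
    rw [mul_sub, sin_sub]
    ring
  rw [integral_comp_sub_mul_of_periodic hper hsin θ (-π), show -π + 2 * π = π by ring]
  simp only [expand]
  rw [integral_sub (((hint _ _).mul_continuousOn (by fun_prop)).const_mul _)
      (((hint _ _).mul_continuousOn (by fun_prop)).const_mul _),
    integral_const_mul, integral_const_mul, integral_even_mul_sin_eq_zero heven, mul_zero, sub_zero,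
    cosCoeff]

lemma abs_integral_comp_sub_mul_sub_le {K τ : ℝ → ℝ} {a b : ℝ} (hab : a ≤ b)
    (hint : ∀ a b, IntervalIntegrable h volume a b) (hh : ∀ t, |h t| ≤ 1)
    (hK : Continuous K) (hτ : Continuous τ) (θ : ℝ) :
    |(∫ s in a..b, h (θ - s) * K s) - ∫ s in a..b, h (θ - s) * τ s| ≤
      ∫ s in a..b, |K s - τ s| := by
  have hint' := intervalIntegrable_comp_sub_left hint θ a b
  rw [← norm_eq_abs, ← integral_sub (hint'.mul_continuousOn hK.continuousOn)
    (hint'.mul_continuousOn hτ.continuousOn)]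
  refine norm_integral_le_of_norm_le hab (.of_forall fun s _ ↦ ?_)
    ((hK.sub hτ).abs.intervalIntegrable a b)
  rw [← mul_sub, norm_mul]
  exact mul_le_of_le_one_left (abs_nonneg _) (hh _)

lemma exists_abs_sin_mul_integral_comp_sub_sub_eval_cos_le {K : ℝ → ℝ}
    (hint : ∀ a b, IntervalIntegrable h volume a b) (hh : ∀ t, |h t| ≤ 1)
    (hper : Function.Periodic h (2 * π)) (heven : Function.Even h) (hK : Continuous K) (n : ℕ)
    (b : ℕ → ℝ) :
    ∃ Q : ℝ[X], Q.natDegree ≤ n ∧ ∀ θ,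
      |sin θ * (∫ s in (0)..2 * π, h (θ - s) * K s) - Q.eval (cos θ)| ≤
        |sin θ| * ∫ s in (0)..2 * π, |K s - ∑ k ∈ range n, b k * sin (k * s)| := by
  obtain ⟨Q, hQ, hQeval⟩ := exists_eval_cos_eq_sin_mul_sum_sin n fun k ↦ b k * cosCoeff h k
  refine ⟨Q, hQ, fun θ ↦ ?_⟩
  have conv : ∑ k ∈ range n, b k * cosCoeff h k * sin (k * θ) =
      ∫ s in (0)..2 * π, h (θ - s) * ∑ k ∈ range n, b k * sin (k * s) := by
    rw [integral_mul_sum (intervalIntegrable_comp_sub_left hint θ _ _) fun k ↦ by fun_prop]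
    refine sum_congr rfl fun k _ ↦ ?_
    rw [integral_comp_sub_mul_sin hint hper heven]
    ring
  rw [hQeval, conv, ← mul_sub, abs_mul]
  gcongr
  exact abs_integral_comp_sub_mul_sub_le two_pi_pos.le hint hh hK (by fun_prop) θ

lemma exists_abs_cos_mul_integral_comp_sub_sub_eval_cos_le {K : ℝ → ℝ}
    (hint : ∀ a b, IntervalIntegrable h volume a b) (hh : ∀ t, |h t| ≤ 1)
    (hper : Function.Periodic h (2 * π)) (heven : Function.Even h) (hK : Continuous K) (n : ℕ)
    (a : ℕ → ℝ) :
    ∃ Q : ℝ[X], Q.natDegree ≤ n ∧ ∀ θ,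
      |cos θ * (∫ s in (0)..2 * π, h (θ - s) * K s) - Q.eval (cos θ)| ≤
        |cos θ| * ∫ s in (0)..2 * π, |K s - ∑ k ∈ range n, a k * cos (k * s)| := by
  obtain ⟨Q, hQ, hQeval⟩ := exists_eval_cos_eq_cos_mul_sum_cos n fun k ↦ a k * cosCoeff h k
  refine ⟨Q, hQ, fun θ ↦ ?_⟩
  have conv : ∑ k ∈ range n, a k * cosCoeff h k * cos (k * θ) =
      ∫ s in (0)..2 * π, h (θ - s) * ∑ k ∈ range n, a k * cos (k * s) := by
    rw [integral_mul_sum (intervalIntegrable_comp_sub_left hint θ _ _) fun k ↦ by fun_prop]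
    refine sum_congr rfl fun k _ ↦ ?_
    rw [integral_comp_sub_mul_cos hint hper heven]
    ring
  rw [hQeval, conv, ← mul_sub, abs_mul]
  gcongr
  exact abs_integral_comp_sub_mul_sub_le two_pi_pos.le hint hh hK (by fun_prop) θ

end Convolution

section LipschitzInCosine

lemma periodic_deriv {g : ℝ → ℝ} {T : ℝ} (hg : Function.Periodic g T) :
    Function.Periodic (deriv g) T := fun t ↦ by
  rw [← deriv_comp_add_const, funext hg]

lemma odd_deriv_of_even {g : ℝ → ℝ} (hg : Function.Even g) : Function.Odd (deriv g) := fun t ↦ by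
  rw [← neg_neg (deriv g (-t)), ← deriv_comp_neg, funext hg]

lemma abs_deriv_le_abs_of_abs_sub_le {g φ : ℝ → ℝ} {φ' t : ℝ} (hφ : HasDerivAt φ φ' t)
    (hg : ∀ s, |g s - g t| ≤ |φ s - φ t|) : |deriv g t| ≤ |φ'| := by
  by_cases hd : DifferentiableAt ℝ g t
  · refine le_of_tendsto_of_tendsto' (hasDerivAt_iff_tendsto_slope.1 hd.hasDerivAt).abs
      (hasDerivAt_iff_tendsto_slope.1 hφ).abs fun s ↦ ?_
    simp only [slope_def_field, abs_div]
    exact div_le_div_of_nonneg_right (hg s) (abs_nonneg _)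
  · simp [deriv_zero_of_not_differentiableAt hd]

lemma integral_pi_sub_mul_deriv_comp_sub {g : ℝ → ℝ} {M : NNReal} (hg : LipschitzWith M g)
    (hper : Function.Periodic g (2 * π)) (θ : ℝ) :
    ∫ s in (0)..2 * π, (π - s) * deriv g (θ - s) = 2 * π * g θ - ∫ u in (0)..2 * π, g u := by
  have reflect : ∫ s in (0)..2 * π, (π - s) * deriv g (θ - s) =
      ∫ u in θ - 2 * π..θ, (u - (θ - π)) * deriv g u := by
    have h := integral_comp_sub_left (a := 0) (b := 2 * π) (fun u ↦ (u - (θ - π)) * deriv g u) θ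
    rw [sub_zero] at h
    rw [← h]
    exact integral_congr fun s _ ↦ by ring
  have hlin : LipschitzWith 1 fun u : ℝ ↦ u - (θ - π) :=
    LipschitzWith.of_dist_le_mul fun s t ↦ by simp
  have hmean : ∫ u in θ - 2 * π..θ, g u = ∫ u in (0)..2 * π, g u := by
    simpa using hper.intervalIntegral_add_eq (θ - 2 * π) 0
  rw [reflect, AbsolutelyContinuousOnInterval.integral_mul_deriv_eq_deriv_mul
    hlin.lipschitzOnWith.absolutelyContinuousOnInterval
    hg.lipschitzOnWith.absolutelyContinuousOnInterval, hper.sub_eq]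
  simp only [deriv_sub_const, deriv_id'', one_mul, hmean]
  ring

variable {g : ℝ → ℝ}

lemma eq_of_cos_eq_of_abs_sub_le (hg : ∀ s t, |g s - g t| ≤ |cos s - cos t|) {s t : ℝ}
    (hst : cos s = cos t) : g s = g t := by
  have h := hg s t
  rwa [hst, sub_self, abs_zero, abs_nonpos_iff, sub_eq_zero] at h

lemma exists_deriv_eq_neg_mul_sin (hg : ∀ s t, |g s - g t| ≤ |cos s - cos t|) :
    ∃ h : ℝ → ℝ, (∀ a b, IntervalIntegrable h volume a b) ∧ (∀ t, |h t| ≤ 1) ∧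
      Function.Periodic h (2 * π) ∧ Function.Even h ∧ ∀ t, deriv g t = -(h t * sin t) := by
  have hbound (t : ℝ) : |deriv g t| ≤ |sin t| := by
    simpa using abs_deriv_le_abs_of_abs_sub_le (hasDerivAt_cos t) fun s ↦ hg s t
  have hper : Function.Periodic (deriv g) (2 * π) :=
    periodic_deriv fun t ↦ eq_of_cos_eq_of_abs_sub_le hg (cos_add_two_pi t)
  have hodd : Function.Odd (deriv g) :=
    odd_deriv_of_even fun t ↦ eq_of_cos_eq_of_abs_sub_le hg (cos_neg t)
  have hquot (t : ℝ) : |-deriv g t / sin t| ≤ 1 := by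
    rw [abs_div, abs_neg]
    exact div_le_one_of_le₀ (hbound t) (abs_nonneg _)
  -- Where `sin t = 0` the quotient is `0` by convention, harmlessly: `deriv g t = 0` there.
  refine ⟨fun t ↦ -deriv g t / sin t,
    intervalIntegrable_of_abs_le ((measurable_deriv g).neg.div measurable_sin) hquot, hquot,
    fun t ↦ ?_, fun t ↦ ?_, fun t ↦ ?_⟩
  · simp only [hper t, sin_add_two_pi]
  · simp only [hodd t, sin_neg, neg_neg, div_neg, neg_div]
  · rw [div_mul_cancel_of_imp, neg_neg]
    intro hsin
    have h := hbound t
    rw [hsin, abs_zero, abs_nonpos_iff] at h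
    rw [h, neg_zero]

lemma lipschitzWith_one_of_abs_sub_le_abs_cos_sub_cos
    (hg : ∀ s t, |g s - g t| ≤ |cos s - cos t|) : LipschitzWith 1 g :=
  LipschitzWith.of_dist_le_mul fun s t ↦ by
    simpa [dist_eq] using (hg s t).trans (abs_cos_sub_cos_le s t)

lemma exists_bernoulli_convolution_representation
    (hg : ∀ s t, |g s - g t| ≤ |cos s - cos t|) :
    ∃ h : ℝ → ℝ, (∀ a b, IntervalIntegrable h volume a b) ∧ (∀ t, |h t| ≤ 1) ∧
      Function.Periodic h (2 * π) ∧ Function.Even h ∧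
      ∀ θ, 2 * π * g θ = (∫ u in (0)..2 * π, g u) -
        sin θ * (∫ s in (0)..2 * π, h (θ - s) * ((π - s) * cos s)) +
        cos θ * ∫ s in (0)..2 * π, h (θ - s) * ((π - s) * sin s) := by
  obtain ⟨h, hint, hh, hper, heven, hderiv⟩ := exists_deriv_eq_neg_mul_sin hg
  refine ⟨h, hint, hh, hper, heven, fun θ ↦ ?_⟩
  have repr := integral_pi_sub_mul_deriv_comp_sub
    (lipschitzWith_one_of_abs_sub_le_abs_cos_sub_cos hg)
    (fun t ↦ eq_of_cos_eq_of_abs_sub_le hg (cos_add_two_pi t)) θ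
  have expand (s : ℝ) : (π - s) * deriv g (θ - s) =
      cos θ * (h (θ - s) * ((π - s) * sin s)) - sin θ * (h (θ - s) * ((π - s) * cos s)) := by
    rw [hderiv, sin_sub]
    ring
  have hint' := intervalIntegrable_comp_sub_left hint θ 0 (2 * π)
  simp only [expand] at repr
  rw [integral_sub ((hint'.mul_continuousOn (by fun_prop)).const_mul _)
    ((hint'.mul_continuousOn (by fun_prop)).const_mul _), integral_const_mul,
    integral_const_mul] at repr
  linarith

lemma exists_abs_sub_eval_cos_le (hg : ∀ s t, |g s - g t| ≤ |cos s - cos t|) {n : ℕ}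
    (hn : 2 ≤ n) :
    ∃ P : ℝ[X], P.natDegree ≤ n ∧ ∀ θ, |g θ - P.eval (cos θ)| ≤
      tan (π / (2 * n)) * |sin θ| + (1 / cos (π / (2 * n)) - 1) * |cos θ| := by
  obtain ⟨h, hint, hh, hper, heven, repr⟩ := exists_bernoulli_convolution_representation hg
  obtain ⟨b, hb⟩ := exists_integral_abs_bernoulli_mul_cos_sub_eq hn
  obtain ⟨a, ha⟩ := exists_integral_abs_bernoulli_mul_sin_sub_eq hn
  obtain ⟨Q, hQ, hQle⟩ := exists_abs_sin_mul_integral_comp_sub_sub_eval_cos_le hint hh hper heven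
    (K := fun s ↦ (π - s) * cos s) (by fun_prop) n b
  obtain ⟨R, hR, hRle⟩ := exists_abs_cos_mul_integral_comp_sub_sub_eval_cos_le hint hh hper heven
    (K := fun s ↦ (π - s) * sin s) (by fun_prop) n a
  refine ⟨C (2 * π)⁻¹ * (C (∫ u in (0)..2 * π, g u) - Q + R), ?_, fun θ ↦ ?_⟩
  · refine (natDegree_C_mul_le _ _).trans (natDegree_add_le_of_degree_le ?_ hR)
    refine (natDegree_sub_le_of_le (natDegree_C _).le hQ).trans ?_
    simp
  · specialize hQle θ
    specialize hRle θ
    rw [hb] at hQle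
    rw [ha] at hRle
    set J₁ := sin θ * ∫ s in (0)..2 * π, h (θ - s) * ((π - s) * cos s)
    set J₂ := cos θ * ∫ s in (0)..2 * π, h (θ - s) * ((π - s) * sin s)
    have error : g θ - (C (2 * π)⁻¹ * (C (∫ u in (0)..2 * π, g u) - Q + R)).eval (cos θ) =
        (2 * π)⁻¹ * ((J₂ - R.eval (cos θ)) - (J₁ - Q.eval (cos θ))) := by
      simp only [eval_mul, eval_add, eval_sub, eval_C]
      field_simp
      linear_combination repr θ
    rw [error, abs_mul, abs_of_pos (by positivity), inv_mul_le_iff₀ two_pi_pos]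
    linarith [abs_sub (J₂ - R.eval (cos θ)) (J₁ - Q.eval (cos θ))]

end LipschitzInCosine

/-- Pointwise Nikolsky-type estimate: if `f` is absolutely continuous on `[−1,1]` with
`|f′| ≤ 1` a.e. (equivalently, `1`-Lipschitz), then for every `n ≥ 2` there is an
algebraic polynomial `P` of degree `≤ n` with
`|f(x) − P(x)| ≤ tan(π/(2n))·√(1−x²) + (sec(π/(2n)) − 1)·|x|` on `[−1,1]`. -/
theorem nikolsky_pointwise_estimate (f : ℝ → ℝ)
    (hf : LipschitzOnWith 1 f (Set.Icc (-1) 1)) (n : ℕ) (hn : 2 ≤ n) :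
    ∃ P : Polynomial ℝ, P.natDegree ≤ n ∧
      ∀ x ∈ Set.Icc (-1 : ℝ) 1,
        |f x - P.eval x| ≤
          Real.tan (Real.pi / (2 * n)) * Real.sqrt (1 - x ^ 2) +
            (1 / Real.cos (Real.pi / (2 * n)) - 1) * |x| := by
  have hg (s t : ℝ) : |f (cos s) - f (cos t)| ≤ |cos s - cos t| := by
    simpa [dist_eq] using hf.dist_le_mul _ (cos_mem_Icc s) _ (cos_mem_Icc t)
  obtain ⟨P, hdeg, hP⟩ := exists_abs_sub_eval_cos_le hg hn
  refine ⟨P, hdeg, fun x hx ↦ ?_⟩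
  simpa only [cos_arccos hx.1 hx.2, sin_arccos, abs_of_nonneg (sqrt_nonneg _)] using hP (arccos x)
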